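/- Let 0=t₀<t₁<⋯<t_N be time levels with positive steps τ_k = t_k − t_{k−1}, maximum step τ = max_{1≤k≤N} τ_k, and step ratios r_k = τ_k/τ_{k−1} (2≤k≤N). Let f : ℝ×ℝ → ℝ satisfy |f(t,u) − f(t,w)| ≤ L_f|u − w| for all t,u,w with a constant L_f > 0. Let {v^n}, {v̄^n} be real sequences, set ṽ^n = v̄^n − v^n, and suppose the variable-step BDF2 perturbation equation D₂ṽ^i = f(t_i, v̄^i) − f(t_i, v^i) + ε^i holds for 2 ≤ i ≤ N. If τ ≤ 1/(4L_f), then for every 2 ≤ n ≤ N, |ṽ^n| ≤ 2·exp(4L_f·t_{n−1})·(|ṽ^1| + 2τ|∂_τṽ^1| + 2t_n·max_{2≤i≤n}|ε^i|). In particular the variable-step BDF2 scheme is stable on arbitrary time meshes (no restriction on the step ratios r_k). -/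

import Mathlib

/-- BDF coefficient function `d₀(x,y)`. -/
noncomputable def d0 (x y : ℝ) : ℝ := (1 + 2*x)/(1 + x) + x*y/(1 + y + x*y)

/-- BDF coefficient function `d₁(x,y)`. -/
noncomputable def d1 (x y : ℝ) : ℝ :=
  -(x/(1 + x)) - x*y/(1 + y + x*y) - (x*y^2/(1 + y + x*y)) * ((1 + x)/(1 + y))

/-- One step in scaled form. -/
lemma step_aux (L τ r g g' w w' R c E B A e : ℝ) (hL : 0 < L) (hτ : 0 < τ) (hr : 0 < r)
    (hE : 0 ≤ E) (hc : 0 ≤ c) (hLτ : L * τ ≤ 1/4)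
    (heq : d0 r 0 * g + d1 r 0 * g' = R) (hR : |R| ≤ L * |w| + E)
    (hw : w = w' + τ * g) (hw' : |w'| ≤ B) (hg' : |g'| ≤ c + E + L * B)
    (he : 0 ≤ e) (hA : 0 ≤ A) (hBA : B + τ * (c / 2 + E) ≤ e * A) :
    |w| ≤ 2 * e * A ∧ |w| ≤ Real.exp (4 * L * τ) * e * A ∧
      |g| ≤ c / 2 + E + L * (Real.exp (4 * L * τ) * e * A) := by
  have hB : 0 ≤ B := (abs_nonneg _).trans hw'
  set M := max B |w| with hM
  have hMB : B ≤ M := le_max_left _ _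
  have hMw : |w| ≤ M := le_max_right _ _
  have hM0 : 0 ≤ M := hB.trans hMB
  have h1 : (1 + 2 * r) * g = r * g' + (1 + r) * R := by
    rw [← heq]; unfold d0 d1; field_simp; ring
  have h2 : (1 + 2 * r) * |g| ≤ r * |g'| + (1 + r) * |R| := by
    have := abs_add_le (r * g') ((1 + r) * R)
    rw [← h1, abs_mul, abs_mul, abs_mul, abs_of_pos hr, abs_of_pos (by linarith : 0 < 1 + r),
      abs_of_pos (by linarith : 0 < 1 + 2 * r)] at this
    exact this
  have hLM : L * B ≤ L * M := mul_le_mul_of_nonneg_left hMB hL.le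
  have hLw : L * |w| ≤ L * M := mul_le_mul_of_nonneg_left hMw hL.le
  have h3 : |g| ≤ c / 2 + E + L * M := by
    have a1 : r * |g'| ≤ r * (c + E + L * M) := mul_le_mul_of_nonneg_left (by linarith) hr.le
    have a2 : (1 + r) * |R| ≤ (1 + r) * (E + L * M) :=
      mul_le_mul_of_nonneg_left (by linarith) (by linarith)
    have : (1 + 2 * r) * |g| ≤ (1 + 2 * r) * (c / 2 + E + L * M) := by nlinarith
    exact le_of_mul_le_mul_left this (by linarith)
  have h4 : |w| ≤ B + τ * (c / 2 + E + L * M) := by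
    have : |w| ≤ |w'| + τ * |g| := by
      have := abs_add_le w' (τ * g)
      rwa [← hw, abs_mul, abs_of_pos hτ] at this
    have := mul_le_mul_of_nonneg_left h3 hτ.le
    linarith
  have h5 : M ≤ e * A + L * τ * M := by
    have h6 : M ≤ B + τ * (c / 2 + E + L * M) := by
      refine max_le ?_ h4
      have : 0 ≤ τ * (c / 2 + E + L * M) := by positivity
      linarith
    nlinarith
  have hx : 0 < L * τ := mul_pos hL hτ
  have heA : 0 ≤ e * A := mul_nonneg he hA
  have h6 : M ≤ (1 + 4 * (L * τ) / 3) * (e * A) := by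
    nlinarith [mul_nonneg hx.le hM0, mul_nonneg hx.le heA,
      mul_nonneg (mul_nonneg hx.le hM0) (by linarith : 0 ≤ 1/4 - L * τ)]
  have h7 : M ≤ Real.exp (4 * L * τ) * e * A := by
    have := Real.add_one_le_exp (4 * L * τ)
    have := mul_le_mul_of_nonneg_right (by linarith : 1 + 4 * (L * τ) / 3 ≤ Real.exp (4 * L * τ)) heA
    linarith
  refine ⟨?_, hMw.trans h7, h3.trans ?_⟩
  · nlinarith [mul_nonneg (by linarith : 0 ≤ 1/4 - L * τ) heA]
  · have := mul_le_mul_of_nonneg_left h7 hL.le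
    linarith

/-- Unconditional stability of the variable-step BDF2 method (Theorem 2.1):
if `τ ≤ 1/(4 L_f)` then for `2 ≤ n ≤ N`,
`|ṽⁿ| ≤ 2 exp(4 L_f t_{n-1}) (|ṽ¹| + 2τ|∂_τ ṽ¹| + 2 t_n max_{2≤i≤n} |εⁱ|)`,
with no restriction on the step ratios. -/
theorem bdf2_stability
    (N : ℕ) (hN : 2 ≤ N)
    (t : ℕ → ℝ) (ht0 : t 0 = 0)
    (htmono : ∀ k, 1 ≤ k → k ≤ N → t (k - 1) < t k)
    (τ : ℕ → ℝ) (hτ : ∀ k, 1 ≤ k → k ≤ N → τ k = t k - t (k - 1))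
    (τmax : ℝ)
    (hτmax : τmax = (Finset.Icc 1 N).sup' (Finset.nonempty_Icc.mpr (by omega)) τ)
    (r : ℕ → ℝ) (hr : ∀ k, 2 ≤ k → k ≤ N → r k = τ k / τ (k - 1))
    (Lf : ℝ) (hLf : 0 < Lf)
    (f : ℝ → ℝ → ℝ)
    (hLip : ∀ s u w : ℝ, |f s u - f s w| ≤ Lf * |u - w|)
    (v vbar ε vt : ℕ → ℝ)
    (hvt : ∀ n, vt n = vbar n - v n)
    (hBDF2 : ∀ i, 2 ≤ i → i ≤ N →
      d0 (r i) 0 * ((vt i - vt (i - 1)) / τ i)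
        + d1 (r i) 0 * ((vt (i - 1) - vt (i - 2)) / τ (i - 1))
        = f (t i) (vbar i) - f (t i) (v i) + ε i)
    (hτsmall : τmax ≤ 1/(4*Lf)) :
    ∀ n, ∀ hn : 2 ≤ n, n ≤ N →
      |vt n| ≤ 2 * Real.exp (4*Lf*t (n - 1)) *
        (|vt 1| + 2*τmax*|(vt 1 - vt 0)/τ 1|
          + 2*t n * (Finset.Icc 2 n).sup' (Finset.nonempty_Icc.mpr hn) (fun i => |ε i|)) := by
  intro n hn hnN
  set E := (Finset.Icc 2 n).sup' (Finset.nonempty_Icc.mpr hn) (fun i => |ε i|) with hEdef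
  have hεE : ∀ i, 2 ≤ i → i ≤ n → |ε i| ≤ E := fun i h2 hi =>
    Finset.le_sup' (fun i => |ε i|) (Finset.mem_Icc.mpr ⟨h2, hi⟩)
  have hE0 : 0 ≤ E := (abs_nonneg _).trans (hεE 2 le_rfl hn)
  have hτpos : ∀ k, 1 ≤ k → k ≤ N → 0 < τ k := fun k h1 h2 => by
    rw [hτ k h1 h2]; linarith [htmono k h1 h2]
  have hτle : ∀ k, 1 ≤ k → k ≤ N → τ k ≤ τmax := fun k h1 h2 => by
    rw [hτmax]; exact Finset.le_sup' τ (Finset.mem_Icc.mpr ⟨h1, h2⟩)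
  have hT0 : 0 ≤ τmax := (hτpos 1 le_rfl (by omega)).le.trans (hτle 1 le_rfl (by omega))
  have htn : ∀ k, k ≤ N → 0 ≤ t k := by
    intro k
    induction k with
    | zero => intro _; rw [ht0]
    | succ k ih =>
      intro h
      have := htmono (k+1) (by omega) h
      simp only [Nat.add_sub_cancel] at this
      linarith [ih (by omega)]
  have hLT : Lf * τmax ≤ 1/4 := by
    rw [le_div_iff₀ (by positivity)] at hτsmall
    linarith
  set G := |(vt 1 - vt 0) / τ 1| with hG
  have hG0 : 0 ≤ G := abs_nonneg _
  let A : ℕ → ℝ := fun k => |vt 1| + τmax * G * (1 - (1/2)^k) + t (k+1) * E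
  have hA : ∀ k, k + 1 ≤ N → 0 ≤ A k := by
    intro k hk
    have h1 : ((1:ℝ)/2)^k ≤ 1 := pow_le_one₀ (by norm_num) (by norm_num)
    have := mul_nonneg (mul_nonneg hT0 hG0) (sub_nonneg.mpr h1)
    have := mul_nonneg (htn _ hk) hE0
    have := abs_nonneg (vt 1)
    simp only [A]; linarith
  have step : ∀ k, k + 2 ≤ n →
      |vt (k+1)| ≤ Real.exp (4*Lf*t (k+1)) * A k →
      |(vt (k+1) - vt k) / τ (k+1)| ≤ G * (1/2)^k + E + Lf * (Real.exp (4*Lf*t (k+1)) * A k) →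
      |vt (k+2)| ≤ 2 * Real.exp (4*Lf*t (k+1)) * A (k+1) ∧
      |vt (k+2)| ≤ Real.exp (4*Lf*t (k+2)) * A (k+1) ∧
      |(vt (k+2) - vt (k+1)) / τ (k+2)| ≤
        G * (1/2)^(k+1) + E + Lf * (Real.exp (4*Lf*t (k+2)) * A (k+1)) := by
    intro k hk hw hg
    have p2 := hτpos (k+2) (by omega) (by omega)
    have p1 := hτpos (k+1) (by omega) (by omega)
    have q2 := hτle (k+2) (by omega) (by omega)
    have heq := hBDF2 (k+2) (by omega) (by omega)
    have e1 : k + 2 - 1 = k + 1 := by omega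
    have e2 : k + 2 - 2 = k := by omega
    have hrr := hr (k+2) (by omega) (by omega)
    have htt := hτ (k+2) (by omega) (by omega)
    rw [e1] at hrr htt
    rw [e1, e2] at heq
    have hrpos : 0 < r (k+2) := by rw [hrr]; positivity
    have hR : |f (t (k+2)) (vbar (k+2)) - f (t (k+2)) (v (k+2)) + ε (k+2)|
        ≤ Lf * |vt (k+2)| + E := by
      have a := hLip (t (k+2)) (vbar (k+2)) (v (k+2))
      rw [← hvt] at a
      have b := hεE (k+2) (by omega) hk
      exact (abs_add_le _ _).trans (add_le_add a b)
    have hc : 0 ≤ G * (1/2)^k := by positivity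
    have hexp : Real.exp (4*Lf*t (k+2))
        = Real.exp (4*Lf*τ (k+2)) * Real.exp (4*Lf*t (k+1)) := by
      rw [← Real.exp_add]; congr 1; rw [htt]; ring
    have hge : 1 ≤ Real.exp (4*Lf*t (k+1)) :=
      Real.one_le_exp (mul_nonneg (by positivity) (htn _ (by omega)))
    have hBA : Real.exp (4*Lf*t (k+1)) * A k + τ (k+2) * (G * (1/2)^k / 2 + E)
        ≤ Real.exp (4*Lf*t (k+1)) * A (k+1) := by
      have h1 : A (k+1) = A k + (τmax * (G * (1/2)^k / 2) + τ (k+2) * E) := by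
        simp only [A]; rw [htt, pow_succ]; ring
      have h2 : τ (k+2) * (G * (1/2)^k / 2) ≤ τmax * (G * (1/2)^k / 2) :=
        mul_le_mul_of_nonneg_right q2 (by positivity)
      have h3 : 0 ≤ τmax * (G * (1/2)^k / 2) + τ (k+2) * E := by positivity
      have h4 := le_mul_of_one_le_left h3 hge
      rw [h1]; linarith
    have key := step_aux Lf (τ (k+2)) (r (k+2)) _ _ (vt (k+2)) (vt (k+1)) _ (G * (1/2)^k) E
      (Real.exp (4*Lf*t (k+1)) * A k) (A (k+1)) (Real.exp (4*Lf*t (k+1))) hLf p2 hrpos hE0 hc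
      ((mul_le_mul_of_nonneg_left q2 hLf.le).trans hLT) heq hR (by field_simp; ring) hw hg
      (Real.exp_pos _).le (hA _ (by omega)) hBA
    rw [hexp]
    refine ⟨key.1, key.2.1, key.2.2.trans (le_of_eq ?_)⟩
    rw [pow_succ]; ring
  have inv : ∀ k, k + 1 ≤ n →
      |vt (k+1)| ≤ Real.exp (4*Lf*t (k+1)) * A k ∧
      |(vt (k+1) - vt k) / τ (k+1)| ≤
        G * (1/2)^k + E + Lf * (Real.exp (4*Lf*t (k+1)) * A k) := by
    intro k
    induction k with
    | zero =>
      intro _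
      have h0 := hA 0 (by omega)
      have ht1 := htn 1 (by omega)
      have hge : 1 ≤ Real.exp (4*Lf*t (0+1)) :=
        Real.one_le_exp (mul_nonneg (by positivity) ht1)
      constructor
      · have : |vt (0+1)| ≤ A 0 := by
          have := mul_nonneg ht1 hE0
          simp [A]; linarith
        exact this.trans (le_mul_of_one_le_left h0 hge)
      · have : 0 ≤ Lf * (Real.exp (4*Lf*t (0+1)) * A 0) := by positivity
        simp only [pow_zero, mul_one]
        change G ≤ _
        linarith
    | succ k ih =>
      intro h
      obtain ⟨a, b⟩ := ih (by omega)
      exact (step k (by omega) a b).2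
  obtain ⟨m, rfl⟩ : ∃ m, n = m + 2 := ⟨n - 2, by omega⟩
  obtain ⟨a, b⟩ := inv m (by omega)
  have h := (step m le_rfl a b).1
  have e1 : m + 2 - 1 = m + 1 := by omega
  rw [e1]
  refine h.trans (mul_le_mul_of_nonneg_left ?_ (by positivity))
  have h1 : 0 ≤ ((1:ℝ)/2)^(m+1) := by positivity
  have h2 := mul_nonneg (mul_nonneg hT0 hG0) h1
  have h3 := mul_nonneg hT0 hG0
  have h4 := mul_nonneg (htn (m+2) hnN) hE0
  have h5 : A (m+1) = |vt 1| + τmax * G * (1 - (1/2)^(m+1)) + t (m+2) * E := rfl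
  rw [h5]; nlinarith
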